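/- arXiv:1310.3794 — 3 statements merged into one kernel-verified Lean document; each statement's English description precedes it below -/
import Mathlib

section
/- The nine operators, arranged in a 3×3 grid as I⊗Z, Z⊗I, Z⊗Z (first row); X⊗I, I⊗X, X⊗X (second row); X⊗Z, Z⊗X, Y⊗Y (third row), form a quantum satisfying assignment of the magic square constraint system: each is self-adjoint with square I, operators in the same row or column commute, each row product is I, the first two column products are I, and the third column product is -I. -/
open Matrix Kronecker

noncomputable def pauliX : Matrix (Fin 2) (Fin 2) ℂ := !![0, 1; 1, 0]
noncomputable def pauliY : Matrix (Fin 2) (Fin 2) ℂ := !![0, -Complex.I; Complex.I, 0]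
noncomputable def pauliZ : Matrix (Fin 2) (Fin 2) ℂ := !![1, 0; 0, -1]

noncomputable def magicSquareAssignment : Fin 9 → Matrix (Fin 2 × Fin 2) (Fin 2 × Fin 2) ℂ
  | 0 => (1 : Matrix (Fin 2) (Fin 2) ℂ) ⊗ₖ pauliZ
  | 1 => pauliZ ⊗ₖ (1 : Matrix (Fin 2) (Fin 2) ℂ)
  | 2 => pauliZ ⊗ₖ pauliZ
  | 3 => pauliX ⊗ₖ (1 : Matrix (Fin 2) (Fin 2) ℂ)
  | 4 => (1 : Matrix (Fin 2) (Fin 2) ℂ) ⊗ₖ pauliX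
  | 5 => pauliX ⊗ₖ pauliX
  | 6 => pauliX ⊗ₖ pauliZ
  | 7 => pauliZ ⊗ₖ pauliX
  | 8 => pauliY ⊗ₖ pauliY

theorem pauli_XX : pauliX * pauliX = 1 := by
  ext i j; fin_cases i <;> fin_cases j <;> simp [pauliX]
theorem pauli_YY : pauliY * pauliY = 1 := by
  ext i j; fin_cases i <;> fin_cases j <;> simp [pauliY]
theorem pauli_ZZ : pauliZ * pauliZ = 1 := by
  ext i j; fin_cases i <;> fin_cases j <;> simp [pauliZ]
theorem pauli_XZ : pauliX * pauliZ = (-Complex.I) • pauliY := by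
  ext i j; fin_cases i <;> fin_cases j <;> simp [pauliX, pauliY, pauliZ]
theorem pauli_ZX : pauliZ * pauliX = Complex.I • pauliY := by
  ext i j; fin_cases i <;> fin_cases j <;> simp [pauliX, pauliY, pauliZ]
theorem pauli_XY : pauliX * pauliY = Complex.I • pauliZ := by
  ext i j; fin_cases i <;> fin_cases j <;> simp [pauliX, pauliY, pauliZ]
theorem pauli_YX : pauliY * pauliX = (-Complex.I) • pauliZ := by
  ext i j; fin_cases i <;> fin_cases j <;> simp [pauliX, pauliY, pauliZ]
theorem pauli_YZ : pauliY * pauliZ = Complex.I • pauliX := by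
  ext i j; fin_cases i <;> fin_cases j <;> simp [pauliX, pauliY, pauliZ]
theorem pauli_ZY : pauliZ * pauliY = (-Complex.I) • pauliX := by
  ext i j; fin_cases i <;> fin_cases j <;> simp [pauliX, pauliY, pauliZ]
theorem pauliX_herm : pauliXᴴ = pauliX := by
  ext i j; fin_cases i <;> fin_cases j <;> simp [pauliX]
theorem pauliY_herm : pauliYᴴ = pauliY := by
  ext i j; fin_cases i <;> fin_cases j <;> simp [pauliY]
theorem pauliZ_herm : pauliZᴴ = pauliZ := by
  ext i j; fin_cases i <;> fin_cases j <;> simp [pauliZ]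

/-- The nine Pauli tensor products `I⊗Z, Z⊗I, Z⊗Z; X⊗I, I⊗X, X⊗X; X⊗Z, Z⊗X, Y⊗Y`
form a quantum satisfying assignment of the magic square constraint system. -/
theorem magic_square_pauli_assignment :
    (∀ j, (magicSquareAssignment j).IsHermitian) ∧
    (∀ j, magicSquareAssignment j * magicSquareAssignment j = 1) ∧
    (∀ j k : Fin 9, (j.val / 3 = k.val / 3 ∨ j.val % 3 = k.val % 3) →
      Commute (magicSquareAssignment j) (magicSquareAssignment k)) ∧
    magicSquareAssignment 0 * magicSquareAssignment 1 * magicSquareAssignment 2 = 1 ∧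
    magicSquareAssignment 3 * magicSquareAssignment 4 * magicSquareAssignment 5 = 1 ∧
    magicSquareAssignment 6 * magicSquareAssignment 7 * magicSquareAssignment 8 = 1 ∧
    magicSquareAssignment 0 * magicSquareAssignment 3 * magicSquareAssignment 6 = 1 ∧
    magicSquareAssignment 1 * magicSquareAssignment 4 * magicSquareAssignment 7 = 1 ∧
    magicSquareAssignment 2 * magicSquareAssignment 5 * magicSquareAssignment 8 = -1 := by
  refine ⟨?_, ?_, ?_, ?_, ?_, ?_, ?_, ?_, ?_⟩
  · intro j
    unfold Matrix.IsHermitian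
    fin_cases j <;> simp [magicSquareAssignment, conjTranspose_kronecker,
      pauliX_herm, pauliY_herm, pauliZ_herm]
  · intro j
    fin_cases j <;> simp [magicSquareAssignment, ← mul_kronecker_mul, pauli_XX, pauli_YY, pauli_ZZ,
      pauli_XZ, pauli_ZX, pauli_XY, pauli_YX, pauli_YZ, pauli_ZY, smul_kronecker,
      kronecker_smul, smul_smul, -neg_smul]
  · intro j k h
    unfold Commute SemiconjBy
    fin_cases j <;> fin_cases k <;> first
      | (exfalso; revert h; decide)
      | rfl
      | simp [magicSquareAssignment, ← mul_kronecker_mul, pauli_XX, pauli_YY, pauli_ZZ,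
      pauli_XZ, pauli_ZX, pauli_XY, pauli_YX, pauli_YZ, pauli_ZY, smul_kronecker,
      kronecker_smul, smul_smul, -neg_smul]
  all_goals simp [magicSquareAssignment, ← mul_kronecker_mul, pauli_XX, pauli_YY, pauli_ZZ,
      pauli_XZ, pauli_ZX, pauli_XY, pauli_YX, pauli_YZ, pauli_ZY, smul_kronecker,
      kronecker_smul, smul_smul, -neg_smul]
  rw [neg_smul, one_smul]
end

section
/- If vertices u, v, w form a triangle with a 3-coloring operator assignment (projections u_α, v_α, w_α for α = 0,1,2, each vertex's triple summing to I, with u_α v_α = v_α u_α = u_α w_α = w_α u_α = v_α w_α = w_α v_α = 0 for all α), then u_α + v_α + w_α = I for each α = 0,1,2. -/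
open Matrix

open scoped ComplexOrder in
theorem proj_sum_zero {d : ℕ} (Q : Fin 3 → Matrix (Fin d) (Fin d) ℂ)
    (hs : ∀ α, (Q α).IsHermitian) (hp : ∀ α, Q α * Q α = Q α)
    (h0 : Q 0 + Q 1 + Q 2 = 0) : ∀ α, Q α = 0 := by
  have hQ : ∀ α, (Q α)ᴴ * Q α = Q α := fun α => by rw [(hs α).eq, hp α]
  have ht : ∀ α, 0 ≤ (Q α).trace := fun α => by
    rw [← hQ α]
    exact (Matrix.posSemidef_conjTranspose_mul_self (Q α)).trace_nonneg
  have hsum : ∑ α, (Q α).trace = 0 := by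
    rw [Fin.sum_univ_three, ← Matrix.trace_add, ← Matrix.trace_add, h0, Matrix.trace_zero]
  intro α
  have h1 := (Finset.sum_eq_zero_iff_of_nonneg (fun i _ => ht i)).1 hsum α (Finset.mem_univ α)
  rw [← hQ α] at h1
  exact Matrix.trace_conjTranspose_mul_self_eq_zero_iff.1 h1

/-- Lemma (triangle): if `u, v, w` form a triangle in a graph with a 3-coloring
operator assignment, then `u_α + v_α + w_α = I` for each color `α`. -/
theorem coloring_triangle_sum {d : ℕ}
    (u v w : Fin 3 → Matrix (Fin d) (Fin d) ℂ)
    (hu_sa : ∀ α, (u α).IsHermitian) (hv_sa : ∀ α, (v α).IsHermitian)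
    (hw_sa : ∀ α, (w α).IsHermitian)
    (hu_proj : ∀ α, u α * u α = u α) (hv_proj : ∀ α, v α * v α = v α)
    (hw_proj : ∀ α, w α * w α = w α)
    (hu_sum : u 0 + u 1 + u 2 = 1) (hv_sum : v 0 + v 1 + v 2 = 1)
    (hw_sum : w 0 + w 1 + w 2 = 1)
    (huv : ∀ α, u α * v α = 0 ∧ v α * u α = 0)
    (huw : ∀ α, u α * w α = 0 ∧ w α * u α = 0)
    (hvw : ∀ α, v α * w α = 0 ∧ w α * v α = 0) :
    ∀ α, u α + v α + w α = 1 := by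
  intro α
  have key := proj_sum_zero (fun α => 1 - (u α + v α + w α))
    (fun α => Matrix.isHermitian_one.sub (((hu_sa α).add (hv_sa α)).add (hw_sa α)))
    (fun α => by
      simp only [mul_sub, sub_mul, mul_add, add_mul, mul_one, one_mul, hu_proj, hv_proj, hw_proj,
        (huv α).1, (huv α).2, (huw α).1, (huw α).2, (hvw α).1, (hvw α).2]
      abel)
    (by
      have : (1 - (u 0 + v 0 + w 0)) + (1 - (u 1 + v 1 + w 1)) + (1 - (u 2 + v 2 + w 2))
          = (1 - (u 0 + u 1 + u 2)) + (1 - (v 0 + v 1 + v 2)) + (1 - (w 0 + w 1 + w 2)) := by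
        abel
      simp only [this, hu_sum, hv_sum, hw_sum, sub_self, add_zero])
    α
  exact (sub_eq_zero.1 key).symm
end

section
/- Let a,b,c,d,e,f be the six vertices of the triangular prism graph (triangles (a,b,c) and (d,e,f), with matching edges (a,d), (b,f), (c,f)... specifically edges: (a,b),(b,c),(a,c),(d,e),(e,f),(d,f),(a,d),(b,e),(c,f)). Given a 3-coloring operator assignment of this graph, the projections assigned to the non-adjacent vertices a and e commute: a_α e_β = e_β a_α for all colors α, β ∈ {0,1,2}. -/
open Matrix


namespace PrismAux

variable {R : Type*} [Ring R]

/-- Adjacent vertices commute (one representative commutator). -/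
lemma edge_key {a0 a1 a2 b0 b1 b2 : R} (ha : a0 + a1 + a2 = 1) (hb : b0 + b1 + b2 = 1)
    (pa0 : a0 * a0 = a0) (pa1 : a1 * a1 = a1) (pa2 : a2 * a2 = a2)
    (o01 : a0 * a1 = 0) (o02 : a0 * a2 = 0) (o10 : a1 * a0 = 0) (o12 : a1 * a2 = 0)
    (o20 : a2 * a0 = 0) (o21 : a2 * a1 = 0)
    (h0 : a0 * b0 = 0) (h1 : a1 * b1 = 0) (h2 : a2 * b2 = 0)
    (k0 : b0 * a0 = 0) (k1 : b1 * a1 = 0) (k2 : b2 * a2 = 0) :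
    a0 * b1 = b1 * a0 := by
  have e1 : a0 * b1 + a2 * b1 = b1 := by
    have := congrArg (· * b1) ha
    simpa [add_mul, h1] using this
  have e1' : b1 * a0 + b1 * a2 = b1 := by
    have := congrArg (b1 * ·) ha
    simpa [mul_add, k1] using this
  have e2 : a2 * b0 + a2 * b1 = a2 := by
    have := congrArg (a2 * ·) hb
    simpa [mul_add, h2] using this
  have e2' : b0 * a2 + b1 * a2 = a2 := by
    have := congrArg (· * a2) hb
    simpa [add_mul, k2] using this
  have e3 : a1 * b0 + a2 * b0 = b0 := by
    have := congrArg (· * b0) ha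
    simpa [add_mul, h0] using this
  have e3' : b0 * a1 + b0 * a2 = b0 := by
    have := congrArg (b0 * ·) ha
    simpa [mul_add, k0] using this
  have e4 : a1 * b0 + a1 * b2 = a1 := by
    have := congrArg (a1 * ·) hb
    simpa [mul_add, h1] using this
  have e4' : b0 * a1 + b2 * a1 = a1 := by
    have := congrArg (· * a1) hb
    simpa [add_mul, k1] using this
  have K2 : a0 * b1 - b1 * a0 = a2 * b0 - b0 * a2 := by
    have x1 : a0 * b1 - b1 * a0 = (a0 * b1 + a2 * b1) - (b1 * a0 + b1 * a2)
      - (a2 * b0 + a2 * b1) + (b0 * a2 + b1 * a2) + (a2 * b0 - b0 * a2) := by abel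
    rw [x1, e1, e1', e2, e2']; abel
  have K3 : a2 * b0 - b0 * a2 = a1 * b2 - b2 * a1 := by
    have x1 : a2 * b0 - b0 * a2 = (a1 * b0 + a2 * b0) - (b0 * a1 + b0 * a2)
      - (a1 * b0 + a1 * b2) + (b0 * a1 + b2 * a1) + (a1 * b2 - b2 * a1) := by abel
    rw [x1, e3, e3', e4, e4']; abel
  have z1 : a1 * (a0 * b1 - b1 * a0) = 0 := by
    rw [mul_sub, ← mul_assoc, ← mul_assoc, o10, h1]; simp
  have z0 : a0 * (a0 * b1 - b1 * a0) = 0 := by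
    rw [K2, mul_sub, ← mul_assoc, ← mul_assoc, o02, h0]; simp
  have z2 : a2 * (a0 * b1 - b1 * a0) = 0 := by
    rw [K2, K3, mul_sub, ← mul_assoc, ← mul_assoc, o21, h2]; simp
  have : (a0 + a1 + a2) * (a0 * b1 - b1 * a0) = 0 := by
    rw [add_mul, add_mul, z0, z1, z2]; simp
  rw [ha, one_mul] at this
  exact sub_eq_zero.mp this

/-- Three idempotents summing to zero vanish when `6` is cancellable. -/
lemma idem_zero [Module ℚ R] {x y z : R} (hx : x * x = x) (hy : y * y = y) (hz : z * z = z)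
    (h : x + y + z = 0) : x = 0 := by
  have hz' : z = -(x + y) := by rw [eq_neg_iff_add_eq_zero, add_comm]; exact h
  subst hz'
  have h1 : x + x + y + y + x * y + y * x = 0 := by
    have : (x + y) * (x + y) = -(x + y) := by rwa [neg_mul_neg] at hz
    rw [add_mul, mul_add, mul_add, hx, hy] at this
    have t := eq_neg_iff_add_eq_zero.mp this
    rw [← t]; abel
  have l1 : x + x + x * y + x * y + x * y + x * y * x = 0 := by
    have := congrArg (x * ·) h1
    simp only [mul_add, ← mul_assoc, hx, mul_zero] at this
    exact this
  have r1 : x + x + y * x + y * x + x * y * x + y * x = 0 := by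
    have := congrArg (· * x) h1
    simp only [add_mul, mul_assoc, hx, zero_mul] at this
    simpa only [mul_assoc] using this
  have c3 : (3 : ℚ) • (x * y - y * x) = 0 := by
    have : (3 : ℚ) • (x * y - y * x) = (x + x + x * y + x * y + x * y + x * y * x)
      - (x + x + y * x + y * x + x * y * x + y * x) := by module
    rw [this, l1, r1, sub_zero]
  have c : x * y = y * x :=
    sub_eq_zero.mp ((smul_eq_zero_iff_right (by norm_num : (3:ℚ) ≠ 0)).mp c3)
  have q : x * y * x = x * y := by rw [mul_assoc, ← c, ← mul_assoc, hx]
  rw [q] at l1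
  have l2 : (6 : ℚ) • (x * y) = 0 := by
    have := congrArg (· * y) l1
    simp only [add_mul, mul_assoc, hy, zero_mul] at this
    rw [← this]; module
  have l3 : x * y = 0 := (smul_eq_zero_iff_right (by norm_num : (6:ℚ) ≠ 0)).mp l2
  rw [l3] at l1
  have l4 : (2 : ℚ) • x = 0 := by rw [← l1]; module
  exact (smul_eq_zero_iff_right (by norm_num : (2:ℚ) ≠ 0)).mp l4

lemma triple_idem {a b c : R} (ha : a * a = a) (hb : b * b = b) (hc : c * c = c)
    (ab : a * b = 0) (ba : b * a = 0) (ac : a * c = 0) (ca : c * a = 0)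
    (bc : b * c = 0) (cb : c * b = 0) :
    (1 - (a + b + c)) * (1 - (a + b + c)) = 1 - (a + b + c) := by
  simp [mul_sub, sub_mul, mul_add, add_mul, *]

/-- An idempotent commuting with its commutator with `e` commutes with `e`. -/
lemma comm_of_comm {a e : R} (ha : a * a = a)
    (hK : a * (a * e - e * a) = (a * e - e * a) * a) : a * e = e * a := by
  have h1 : a * e - a * e * a = a * e * a - e * a := by
    simpa only [mul_sub, sub_mul, mul_assoc, ← mul_assoc a a, ha] using hK
  have h2 : a * e = a * e * a := by
    have := congrArg (a * ·) h1
    simp only [mul_sub, ← mul_assoc, ha, sub_self] at this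
    exact sub_eq_zero.mp this
  rw [← h2, sub_self] at h1
  exact sub_eq_zero.mp h1.symm

/-- Two idempotents in a sum-to-one triple of idempotents are orthogonal. -/
lemma orth [Module ℚ R] {p q r : R} (hp : p * p = p) (hq : q * q = q) (hr : r * r = r)
    (h : p + q + r = 1) : p * q = 0 := by
  have hr' : r = 1 - (p + q) := by rw [← h]; abel
  subst hr'
  have h1 : p * q + q * p = 0 := by
    have t : (1 - (p + q)) * (1 - (p + q)) =
      1 - (p + q) - (p + q) + (p * p + p * q + (q * p + q * q)) := by noncomm_ring
    rw [t, hp, hq] at hr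
    have u := sub_eq_zero.mpr hr
    rw [← u]; abel
  have l : p * q + p * q * p = 0 := by
    have := congrArg (p * ·) h1
    simpa only [mul_add, ← mul_assoc, hp, mul_zero] using this
  have r : p * q * p + q * p = 0 := by
    have := congrArg (· * p) h1
    simp only [add_mul, mul_assoc, hp, zero_mul] at this
    simpa only [mul_assoc] using this
  have : (2 : ℚ) • (p * q) = 0 := by
    have : (2 : ℚ) • (p * q) = (p * q + q * p) + (p * q + p * q * p) - (p * q * p + q * p) := by
      module
    rw [this, h1, l, r]; simp
  exact (smul_eq_zero_iff_right (by norm_num : (2:ℚ) ≠ 0)).mp this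

/-- Operator assignment at one vertex. -/
structure IsVertex (p : Fin 3 → R) : Prop where
  idem : ∀ i, p i * p i = p i
  sum : p 0 + p 1 + p 2 = 1

/-- Edge relation. -/
def IsEdge (p q : Fin 3 → R) : Prop := ∀ i, p i * q i = 0 ∧ q i * p i = 0

lemma IsVertex.sum' {p : Fin 3 → R} (hp : IsVertex p) {i j k : Fin 3}
    (hij : i ≠ j) (hik : i ≠ k) (hjk : j ≠ k) : p i + p j + p k = 1 := by
  rw [← hp.sum]
  fin_cases i <;> fin_cases j <;> fin_cases k <;> simp at hij hik hjk ⊢ <;> abel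

lemma exists_third : ∀ i j : Fin 3, ∃ k, i ≠ k ∧ j ≠ k := by decide

lemma IsVertex.orth [Module ℚ R] {p : Fin 3 → R} (hp : IsVertex p) {i j : Fin 3}
    (hij : i ≠ j) : p i * p j = 0 := by
  obtain ⟨k, hik, hjk⟩ := exists_third i j
  exact PrismAux.orth (hp.idem i) (hp.idem j) (hp.idem k) (hp.sum' hij hik hjk)

lemma edge_comm [Module ℚ R] {p q : Fin 3 → R} (hp : IsVertex p) (hq : IsVertex q)
    (h : IsEdge p q) (i j : Fin 3) : p i * q j = q j * p i := by
  by_cases hij : i = j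
  · subst hij; rw [(h i).1, (h i).2]
  · obtain ⟨k, hik, hjk⟩ := exists_third i j
    exact edge_key (hp.sum' hij hik hjk) (hq.sum' hij hik hjk) (hp.idem _) (hp.idem _)
      (hp.idem _) (hp.orth hij) (hp.orth hik) (hp.orth (Ne.symm hij)) (hp.orth hjk)
      (hp.orth (Ne.symm hik)) (hp.orth (Ne.symm hjk)) (h i).1 (h j).1 (h k).1 (h i).2 (h j).2
      (h k).2

lemma triangle_sum [Module ℚ R] {p q r : Fin 3 → R} (hp : IsVertex p) (hq : IsVertex q)
    (hr : IsVertex r) (pq : IsEdge p q) (qr : IsEdge q r) (pr : IsEdge p r) (i : Fin 3) :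
    p i + q i + r i = 1 := by
  have key : ∀ i, (1 - (p i + q i + r i)) * (1 - (p i + q i + r i)) = 1 - (p i + q i + r i) :=
    fun i => triple_idem (hp.idem i) (hq.idem i) (hr.idem i) (pq i).1 (pq i).2 (pr i).1 (pr i).2
      (qr i).1 (qr i).2
  obtain ⟨j, hij, -⟩ := exists_third i i
  obtain ⟨k, hik, hjk⟩ := exists_third i j
  have s : (1 - (p i + q i + r i)) + (1 - (p j + q j + r j)) + (1 - (p k + q k + r k)) = 0 := by
    have : (1 - (p i + q i + r i)) + (1 - (p j + q j + r j)) + (1 - (p k + q k + r k))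
      = 1 + 1 + 1 - (p i + p j + p k) - (q i + q j + q k) - (r i + r j + r k) := by abel
    rw [this, hp.sum' hij hik hjk, hq.sum' hij hik hjk, hr.sum' hij hik hjk]; abel
  exact (sub_eq_zero.mp (idem_zero (key i) (key j) (key k) s)).symm

lemma prism [Module ℚ R] {a b c d e f : Fin 3 → R} (ha : IsVertex a) (hb : IsVertex b)
    (hc : IsVertex c) (hd : IsVertex d) (he : IsVertex e) (hf : IsVertex f)
    (ab : IsEdge a b) (bc : IsEdge b c) (ac : IsEdge a c) (de : IsEdge d e) (ef : IsEdge e f)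
    (df : IsEdge d f) (ad : IsEdge a d) (be : IsEdge b e) (cf : IsEdge c f) (i j : Fin 3) :
    a i * e j = e j * a i := by
  have ea : a i = 1 - b i - c i := by
    rw [← triangle_sum ha hb hc ab bc ac i]; abel
  have ee : e j = 1 - d j - f j := by
    rw [← triangle_sum hd he hf de ef df j]; abel
  have hK : a i * e j - e j * a i = c i * d j - d j * c i := by
    have h1 : a i * e j - e j * a i = -(c i * e j - e j * c i) - (b i * e j - e j * b i) := by
      rw [ea]; noncomm_ring
    have h2 : c i * e j - e j * c i = -(c i * d j - d j * c i) - (c i * f j - f j * c i) := by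
      rw [ee]; noncomm_ring
    rw [h1, h2, edge_comm hb he be, edge_comm hc hf cf]; simp
  apply comm_of_comm (ha.idem i)
  rw [hK]
  have c1 : Commute (a i) (c i) := edge_comm ha hc ac i i
  have c2 : Commute (a i) (d j) := edge_comm ha hd ad i j
  exact (c1.mul_right c2).sub_right (c2.mul_right c1)

end PrismAux

/-- The triangular prism graph on vertices `a=0, b=1, c=2, d=3, e=4, f=5` with edges
`(a,b),(b,c),(a,c),(d,e),(e,f),(d,f),(a,d),(b,e),(c,f)`.  Given a 3-coloring operator
assignment, the projections assigned to the non-adjacent vertices `a` and `e`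
commute: `a_α e_β = e_β a_α` for all colors `α, β`. -/
theorem prism_commutativity_gadget {d : ℕ}
    (P : Fin 6 → Fin 3 → Matrix (Fin d) (Fin d) ℂ)
    (h_sa : ∀ v α, (P v α).IsHermitian)
    (h_proj : ∀ v α, P v α * P v α = P v α)
    (h_sum : ∀ v, P v 0 + P v 1 + P v 2 = 1)
    (h_edge : ∀ e ∈ [((0 : Fin 6), (1 : Fin 6)), (1, 2), (0, 2), (3, 4), (4, 5),
        (3, 5), (0, 3), (1, 4), (2, 5)],
      ∀ α, P e.1 α * P e.2 α = 0 ∧ P e.2 α * P e.1 α = 0) :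
    ∀ α β, P 0 α * P 4 β = P 4 β * P 0 α := by
  have hv : ∀ v, PrismAux.IsVertex (P v) := fun v => ⟨h_proj v, h_sum v⟩
  exact PrismAux.prism (hv 0) (hv 1) (hv 2) (hv 3) (hv 4) (hv 5)
    (h_edge (0, 1) (by simp)) (h_edge (1, 2) (by simp)) (h_edge (0, 2) (by simp))
    (h_edge (3, 4) (by simp)) (h_edge (4, 5) (by simp)) (h_edge (3, 5) (by simp))
    (h_edge (0, 3) (by simp)) (h_edge (1, 4) (by simp)) (h_edge (2, 5) (by simp))
end
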